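/- If in addition p ≥ 6, then u is identically zero; that is, for p ≥ 6 the Schrödinger–Bopp–Podolsky system has no nontrivial solution in this class. -/

import Mathlib

open MeasureTheory Real

noncomputable section

/-- Three dimensional Euclidean space. -/
abbrev E3 := EuclideanSpace ℝ (Fin 3)

/-- The Laplacian of a function on `ℝ³`, as the sum of the second partial derivatives. -/
def lap (f : E3 → ℝ) (x : E3) : ℝ :=
  ∑ i : Fin 3, fderiv ℝ (fun y => fderiv ℝ f y (EuclideanSpace.single i 1)) x
    (EuclideanSpace.single i 1)

/-! In the Pohozaev and Nehari identities every density is the divergence of a vector field `V`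
with `V / (1 + |x|)` integrable. Such a divergence, when integrable, has integral zero: the
derivatives of the dilated cutoffs `χ (x / n)` are bounded by a multiple of `1 / (1 + |x|)`
uniformly in `n`. In dimension `d`, eliminating `∫ |∇u|²` and `∫ φ u²` from the two Nehari
identities and the Pohozaev identity leaves
`ω ∫ u² + (d/2 - 1 - d/p) ∫ |u|^p + q²/(16π) ((6 - d) ∫ |∇φ|² + (8 - d) a² ∫ (Δφ)²) = 0`.
For `2 < d ≤ 6` and `p` at least the critical exponent `2d/(d - 2)` every term is nonnegative, so
`∫ u² = 0`. -/

section

open InnerProductSpace Filter Topology Module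
open scoped Gradient Laplacian RealInnerProductSpace

section NormedSpace

variable {E F : Type*} [NormedAddCommGroup E] [NormedSpace ℝ E] [NormedAddCommGroup F]
  [NormedSpace ℝ F]

lemma differentiableAt_fderiv {f : E → F} {x : E} (hf : ContDiffAt ℝ 2 f x) :
    DifferentiableAt ℝ (fderiv ℝ f) x :=
  (hf.fderiv_right (m := 1) le_rfl).differentiableAt one_ne_zero

lemma fderiv_fderiv_apply {f : E → F} {x : E} (hf : ContDiffAt ℝ 2 f x) (v w : E) :
    fderiv ℝ (fun y => fderiv ℝ f y v) x w = fderiv ℝ (fderiv ℝ f) x w v := by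
  simp [fderiv_clm_apply (differentiableAt_fderiv hf) (differentiableAt_const v)]

lemma contDiff_fderiv_apply {f : E → F} {m n : WithTop ℕ∞} (hf : ContDiff ℝ n f)
    (hmn : m + 1 ≤ n) (v : E) : ContDiff ℝ m (fun x => fderiv ℝ f x v) :=
  (hf.fderiv_right hmn).clm_apply contDiff_const

/-- The derivative `x · ∇f` along the generator `x` of dilations. -/
def eulerDeriv (f : E → F) (x : E) : F := fderiv ℝ f x x

lemma contDiff_eulerDeriv {f : E → F} {m n : WithTop ℕ∞} (hf : ContDiff ℝ n f)
    (hmn : m + 1 ≤ n) : ContDiff ℝ m (eulerDeriv f) :=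
  (hf.fderiv_right hmn).clm_apply contDiff_id

lemma fderiv_eulerDeriv {f : E → F} {x : E} (hf : ContDiffAt ℝ 2 f x) (v : E) :
    fderiv ℝ (eulerDeriv f) x v = eulerDeriv (fun y => fderiv ℝ f y v) x + fderiv ℝ f x v := by
  unfold eulerDeriv
  rw [fderiv_fderiv_apply hf, fderiv_clm_apply (differentiableAt_fderiv hf) differentiableAt_fun_id,
    (hf.isSymmSndFDerivAt (by simp)).eq]
  simp [add_comm]

lemma eulerDeriv_mul {f g : E → ℝ} {x : E} (hf : DifferentiableAt ℝ f x)
    (hg : DifferentiableAt ℝ g x) :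
    eulerDeriv (fun y => f y * g y) x = f x * eulerDeriv g x + g x * eulerDeriv f x := by
  simp [eulerDeriv, fderiv_fun_mul hf hg]

lemma eulerDeriv_sq {f : E → ℝ} {x : E} (hf : DifferentiableAt ℝ f x) :
    eulerDeriv (fun y => f y ^ 2) x = 2 * f x * eulerDeriv f x := by
  simp [eulerDeriv, fderiv_fun_pow 2 hf]

lemma eulerDeriv_abs_rpow {f : E → ℝ} {x : E} (hf : DifferentiableAt ℝ f x) {p : ℝ}
    (hp : 1 < p) :
    eulerDeriv (fun y => |f y| ^ p) x = p * |f x| ^ (p - 2) * f x * eulerDeriv f x := by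
  have h := (hasDerivAt_abs_rpow (f x) hp).comp_hasFDerivAt x hf.hasFDerivAt
  rw [eulerDeriv, show fderiv ℝ (fun y => |f y| ^ p) x = _ from h.fderiv]
  simp [eulerDeriv]

/-- The divergence `∑ ∂ᵢVᵢ` of a vector field, written without coordinates as `tr DV`. -/
def divergence (V : E → E) (x : E) : ℝ := LinearMap.trace ℝ E (fderiv ℝ V x)

lemma divergence_add {V W : E → E} {x : E} (hV : DifferentiableAt ℝ V x)
    (hW : DifferentiableAt ℝ W x) :
    divergence (V + W) x = divergence V x + divergence W x := by
  simp [divergence, fderiv_add hV hW]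

lemma divergence_const_smul (c : ℝ) (V : E → E) (x : E) :
    divergence (c • V) x = c * divergence V x := by
  simp [divergence, fderiv_const_smul_field]

variable [FiniteDimensional ℝ E]

/-- The trace as a continuous linear functional: `divergence V x = traceCLM (fderiv ℝ V x)`. -/
def traceCLM : (E →L[ℝ] E) →L[ℝ] ℝ :=
  (LinearMap.trace ℝ E ∘ₗ ContinuousLinearMap.coeLM ℝ).toContinuousLinearMap

lemma continuous_divergence {V : E → E} (hV : ContDiff ℝ 1 V) : Continuous (divergence V) :=
  traceCLM.continuous.comp (hV.continuous_fderiv one_ne_zero)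

lemma divergence_smul {f : E → ℝ} {V : E → E} {x : E} (hf : DifferentiableAt ℝ f x)
    (hV : DifferentiableAt ℝ V x) :
    divergence (fun y => f y • V y) x = f x * divergence V x + fderiv ℝ f x (V x) := by
  simp [divergence, fderiv_fun_smul hf hV, LinearMap.trace_smulRight]

lemma divergence_smul_id {f : E → ℝ} {x : E} (hf : DifferentiableAt ℝ f x) :
    divergence (fun y => f y • y) x = finrank ℝ E * f x + eulerDeriv f x := by
  rw [divergence_smul hf differentiableAt_fun_id]
  simp [divergence, eulerDeriv, mul_comm]

lemma exists_cutoff_seq :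
    ∃ (χ : ℕ → E → ℝ) (M : ℝ), (∀ n, ContDiff ℝ 1 (χ n)) ∧ (∀ n, HasCompactSupport (χ n)) ∧
      (∀ n x, ‖χ n x‖ ≤ 1) ∧ (∀ n x, ‖fderiv ℝ (χ n) x‖ ≤ M * (1 + ‖x‖)⁻¹) ∧
      (∀ x, Tendsto (fun n => χ n x) atTop (𝓝 1)) ∧
      ∀ x, Tendsto (fun n => fderiv ℝ (χ n) x) atTop (𝓝 0) := by
  let b : ContDiffBump (0 : E) := ⟨1, 2, one_pos, one_lt_two⟩
  have hb : ContDiff ℝ 1 b := b.contDiff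
  have hb' : Continuous (fderiv ℝ b) := hb.continuous_fderiv one_ne_zero
  obtain ⟨M, hM⟩ : ∃ M, ∀ y, ‖(1 + ‖y‖) • fderiv ℝ b y‖ ≤ M :=
    Continuous.bounded_above_of_compact_support (by fun_prop)
      (HasCompactSupport.smul_left (f := fun y : E => 1 + ‖y‖) (b.hasCompactSupport.fderiv ℝ))
  let c : ℕ → ℝ := fun n => 1 / ((n : ℝ) + 1)
  have hc₀ (n : ℕ) : 0 < c n := by positivity
  have hc₁ (n : ℕ) : c n ≤ 1 := div_le_one_of_le₀ (by simp) (by positivity)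
  have hc : Tendsto c atTop (𝓝 0) := tendsto_one_div_add_atTop_nhds_zero_nat
  have hcx (x : E) : Tendsto (fun n => c n • x) atTop (𝓝 0) := by simpa using hc.smul_const x
  have hχ' (n : ℕ) (x : E) : fderiv ℝ (fun y => b (c n • y)) x = c n • fderiv ℝ b (c n • x) :=
    fderiv_comp_smul (c n)
  refine ⟨fun n x => b (c n • x), M, fun n => hb.comp (contDiff_const_smul (c n)),
    fun n => b.hasCompactSupport.comp_smul (hc₀ n).ne', fun n x => ?_, fun n x => ?_,
    fun x => ?_, fun x => ?_⟩
  · rw [norm_of_nonneg b.nonneg]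
    exact b.le_one
  · rw [hχ', norm_smul, norm_of_nonneg (hc₀ n).le, ← div_eq_mul_inv, le_div_iff₀ (by positivity)]
    calc c n * ‖fderiv ℝ b (c n • x)‖ * (1 + ‖x‖)
        = (c n + c n * ‖x‖) * ‖fderiv ℝ b (c n • x)‖ := by ring
      _ ≤ (1 + c n * ‖x‖) * ‖fderiv ℝ b (c n • x)‖ := by gcongr; exact hc₁ n
      _ = ‖(1 + ‖c n • x‖) • fderiv ℝ b (c n • x)‖ := by
        rw [norm_smul, norm_of_nonneg (by positivity : 0 ≤ 1 + ‖c n • x‖), norm_smul,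
          norm_of_nonneg (hc₀ n).le]
      _ ≤ M := hM _
  · have hb₀ : b 0 = 1 := b.one_of_mem_closedBall (by simp [b])
    exact hb₀ ▸ (hb.continuous.tendsto 0).comp (hcx x)
  · simp_rw [hχ']
    simpa using hc.smul ((hb'.tendsto 0).comp (hcx x))

section DivergenceTheorem

variable [MeasurableSpace E] [BorelSpace E] {μ : Measure E} [μ.IsAddHaarMeasure]

lemma integral_fderiv_eq_zero_of_hasCompactSupport {F : Type*} [NormedAddCommGroup F]
    [NormedSpace ℝ F] {f : E → F} (hf : ContDiff ℝ 1 f) (hfc : HasCompactSupport f) :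
    ∫ x, fderiv ℝ f x ∂μ = 0 := by
  have hf' : Continuous (fderiv ℝ f) := hf.continuous_fderiv one_ne_zero
  ext v
  have hint : Integrable f μ := hf.continuous.integrable_of_hasCompactSupport hfc
  have hint' : Integrable (fun x => fderiv ℝ f x v) μ :=
    (hf'.clm_apply continuous_const).integrable_of_hasCompactSupport (hfc.fderiv_apply ℝ v)
  have hparts := integral_smul_fderiv_eq_neg_fderiv_smul_of_integrable (μ := μ)
    (f := fun _ => (1 : ℝ)) (g := f) (v := v) (by simp) (by simpa using hint')
    (by simpa using hint) (by simp)
    fun x _ => hf.differentiable one_ne_zero x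
  rw [ContinuousLinearMap.integral_apply
    (hf'.integrable_of_hasCompactSupport (hfc.fderiv ℝ))]
  simpa using hparts

lemma integral_divergence_eq_zero_of_hasCompactSupport {V : E → E} (hV : ContDiff ℝ 1 V)
    (hVc : HasCompactSupport V) : ∫ x, divergence V x ∂μ = 0 := by
  have hint : Integrable (fderiv ℝ V) μ :=
    (hV.continuous_fderiv one_ne_zero).integrable_of_hasCompactSupport (hVc.fderiv ℝ)
  calc ∫ x, divergence V x ∂μ = traceCLM (∫ x, fderiv ℝ V x ∂μ) :=
        traceCLM.integral_comp_comm hint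
    _ = 0 := by rw [integral_fderiv_eq_zero_of_hasCompactSupport hV hVc, map_zero]

theorem integral_divergence_eq_zero {V : E → E} (hV : ContDiff ℝ 1 V)
    (hdecay : Integrable (fun x => (1 + ‖x‖)⁻¹ • V x) μ) (hdiv : Integrable (divergence V) μ) :
    ∫ x, divergence V x ∂μ = 0 := by
  obtain ⟨χ, M, hχ, hχc, hχ₁, hχ', hlim, hlim'⟩ := exists_cutoff_seq (E := E)
  have hprod (n : ℕ) (x : E) : divergence (fun y => χ n y • V y) x =
      χ n x * divergence V x + fderiv ℝ (χ n) x (V x) :=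
    divergence_smul ((hχ n).differentiable one_ne_zero x) (hV.differentiable one_ne_zero x)
  have hzero (n : ℕ) : ∫ x, divergence (fun y => χ n y • V y) x ∂μ = 0 :=
    integral_divergence_eq_zero_of_hasCompactSupport ((hχ n).smul hV) (hχc n).smul_right
  have hbound (n : ℕ) (x : E) : ‖divergence (fun y => χ n y • V y) x‖ ≤
      ‖divergence V x‖ + M * ‖(1 + ‖x‖)⁻¹ • V x‖ := by
    rw [hprod]
    refine (norm_add_le _ _).trans (add_le_add ?_ ?_)
    · rw [norm_mul]
      exact mul_le_of_le_one_left (norm_nonneg _) (hχ₁ n x)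
    · calc ‖fderiv ℝ (χ n) x (V x)‖ ≤ M * (1 + ‖x‖)⁻¹ * ‖V x‖ :=
            ContinuousLinearMap.le_of_opNorm_le _ (hχ' n x) _
        _ = M * ‖(1 + ‖x‖)⁻¹ • V x‖ := by
          rw [norm_smul, norm_of_nonneg (by positivity), mul_assoc]
  have hptwise (x : E) :
      Tendsto (fun n => divergence (fun y => χ n y • V y) x) atTop (𝓝 (divergence V x)) := by
    simp_rw [hprod]
    have hlim'' : Tendsto (fun n => fderiv ℝ (χ n) x (V x)) atTop (𝓝 0) := by
      simpa [Function.comp_def] using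
        ((ContinuousLinearMap.apply ℝ ℝ (V x)).continuous.tendsto 0).comp (hlim' x)
    simpa using ((hlim x).mul_const (divergence V x)).add hlim''
  have hconv : Tendsto (fun n => ∫ x, divergence (fun y => χ n y • V y) x ∂μ) atTop
      (𝓝 (∫ x, divergence V x ∂μ)) :=
    tendsto_integral_of_dominated_convergence _
      (fun n => (continuous_divergence ((hχ n).smul hV)).aestronglyMeasurable)
      (hdiv.norm.add (hdecay.norm.const_mul M)) (fun n => .of_forall (hbound n))
      (.of_forall hptwise)
  simp_rw [hzero] at hconv
  exact tendsto_nhds_unique hconv tendsto_const_nhds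

end DivergenceTheorem

/-- The functions that are the divergence of a `C¹` vector field `V` with `V / (1 + |x|)`
integrable. They play the role of zero below: an integrable one has integral zero. The fields
`(x · ∇f) ∇g` of the Pohozaev argument are in general not integrable, but satisfy this condition. -/
def decayingDivergence [MeasurableSpace E] (μ : Measure E) : Submodule ℝ (E → ℝ) where
  carrier := {f | ∃ V : E → E, ContDiff ℝ 1 V ∧ Integrable (fun x => (1 + ‖x‖)⁻¹ • V x) μ ∧
    ∀ x, divergence V x = f x}
  zero_mem' := ⟨0, contDiff_zero_fun, by simp, by simp [divergence]⟩
  add_mem' := by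
    rintro f g ⟨V, hV, hVint, hVdiv⟩ ⟨W, hW, hWint, hWdiv⟩
    refine ⟨V + W, hV.add hW, by simpa [smul_add] using hVint.fun_add hWint, fun x => ?_⟩
    rw [divergence_add (hV.differentiable one_ne_zero x) (hW.differentiable one_ne_zero x),
      hVdiv, hWdiv, Pi.add_apply]
  smul_mem' := by
    rintro c f ⟨V, hV, hVint, hVdiv⟩
    refine ⟨c • V, hV.const_smul c, by simpa [smul_comm _ c] using hVint.fun_smul c, fun x => ?_⟩
    rw [divergence_const_smul, hVdiv, Pi.smul_apply, smul_eq_mul]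

namespace decayingDivergence

variable [MeasurableSpace E] [BorelSpace E] {μ : Measure E}

lemma integral_eq_zero [μ.IsAddHaarMeasure] {f : E → ℝ} (hf : f ∈ decayingDivergence μ)
    (hint : Integrable f μ) : ∫ x, f x ∂μ = 0 := by
  obtain ⟨V, hV, hVint, hVdiv⟩ := hf
  obtain rfl : divergence V = f := funext hVdiv
  exact integral_divergence_eq_zero hV hVint hint

lemma divergence_mem {V : E → E} {g : E → ℝ} (hV : ContDiff ℝ 1 V)
    (hg : Integrable g μ) (hle : ∀ x, ‖V x‖ ≤ (1 + ‖x‖) * g x) :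
    divergence V ∈ decayingDivergence μ := by
  have hcont : Continuous fun x : E => (1 + ‖x‖)⁻¹ • V x :=
    ((by fun_prop : Continuous fun x : E => 1 + ‖x‖).inv₀ fun x => by positivity).smul hV.continuous
  refine ⟨V, hV, hg.mono' hcont.aestronglyMeasurable (.of_forall fun x => ?_), fun _ => rfl⟩
  rw [norm_smul, norm_of_nonneg (by positivity), inv_mul_le_iff₀ (by positivity)]
  exact hle x

lemma finrank_mul_add_eulerDeriv_mem {f : E → ℝ} (hf : ContDiff ℝ 1 f) (hint : Integrable f μ) :
    (fun x => finrank ℝ E * f x + eulerDeriv f x) ∈ decayingDivergence μ := by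
  rw [← funext fun x => divergence_smul_id (hf.differentiable one_ne_zero x)]
  refine divergence_mem (hf.smul contDiff_id) hint.abs fun x => ?_
  rw [norm_smul, norm_eq_abs, mul_comm]
  gcongr
  simp

end decayingDivergence

end NormedSpace

section InnerProductSpace

variable {E : Type*} [NormedAddCommGroup E] [InnerProductSpace ℝ E]

section Gradient

variable [CompleteSpace E]

lemma contDiff_gradient {f : E → ℝ} {m n : WithTop ℕ∞} (hf : ContDiff ℝ n f)
    (hmn : m + 1 ≤ n) : ContDiff ℝ m (∇ f) :=
  (toDual ℝ E).symm.contDiff.comp (hf.fderiv_right hmn)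

lemma norm_gradient (f : E → ℝ) (x : E) : ‖∇ f x‖ = ‖fderiv ℝ f x‖ := by
  simp [gradient]

lemma inner_fderiv_gradient {f : E → ℝ} {x : E} (hf : ContDiffAt ℝ 2 f x) (v w : E) :
    ⟪fderiv ℝ (∇ f) x v, w⟫ = fderiv ℝ (fderiv ℝ f) x v w := by
  have h := ((toDual ℝ E).symm.toContinuousLinearEquiv.hasFDerivAt).comp x
    (differentiableAt_fderiv hf).hasFDerivAt
  rw [show fderiv ℝ (∇ f) x = _ from h.fderiv]
  simp

lemma norm_gradient_eulerDeriv_le {f : E → ℝ} (hf : ContDiff ℝ 2 f) (x : E) :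
    ‖∇ (eulerDeriv f) x‖ ≤ (1 + ‖x‖) * (‖∇ f x‖ + ‖fderiv ℝ (fderiv ℝ f) x‖) := by
  rw [norm_gradient, norm_gradient]
  refine ContinuousLinearMap.opNorm_le_bound _ (by positivity) fun v => ?_
  rw [fderiv_eulerDeriv hf.contDiffAt, eulerDeriv, fderiv_fderiv_apply hf.contDiffAt]
  calc ‖fderiv ℝ (fderiv ℝ f) x x v + fderiv ℝ f x v‖
      ≤ ‖fderiv ℝ (fderiv ℝ f) x‖ * ‖x‖ * ‖v‖ + ‖fderiv ℝ f x‖ * ‖v‖ :=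
        norm_add_le_of_le (ContinuousLinearMap.le_opNorm₂ _ x v) (ContinuousLinearMap.le_opNorm _ v)
    _ ≤ (1 + ‖x‖) * (‖fderiv ℝ f x‖ + ‖fderiv ℝ (fderiv ℝ f) x‖) * ‖v‖ := by
        rw [← add_mul]
        gcongr
        nlinarith [norm_nonneg x, norm_nonneg (fderiv ℝ f x), norm_nonneg (fderiv ℝ (fderiv ℝ f) x),
          mul_nonneg (norm_nonneg x) (norm_nonneg (fderiv ℝ f x))]

end Gradient

variable [FiniteDimensional ℝ E]

lemma laplacian_eq_sum_fderiv_fderiv {ι : Type*} [Fintype ι] (b : OrthonormalBasis ι ℝ E)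
    {f : E → ℝ} {x : E} (hf : ContDiffAt ℝ 2 f x) :
    Δ f x = ∑ i, fderiv ℝ (fun y => fderiv ℝ f y (b i)) x (b i) := by
  simp [laplacian_eq_iteratedFDeriv_orthonormalBasis f b, iteratedFDeriv_two_apply,
    fderiv_fderiv_apply hf]

lemma contDiff_laplacian {f : E → ℝ} {m n : WithTop ℕ∞} (hf : ContDiff ℝ n f) (hmn : m + 2 ≤ n) :
    ContDiff ℝ m (Δ f) := by
  have h : ContDiff ℝ m (iteratedFDeriv ℝ 2 f) := hf.iteratedFDeriv_right hmn
  rw [laplacian_eq_iteratedFDeriv_stdOrthonormalBasis]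
  exact ContDiff.sum fun i _ => (ContinuousMultilinearMap.apply ℝ (fun _ : Fin 2 => E) ℝ
    ![stdOrthonormalBasis ℝ E i, stdOrthonormalBasis ℝ E i]).contDiff.comp h

lemma laplacian_eulerDeriv {f : E → ℝ} (hf : ContDiff ℝ 3 f) (x : E) :
    Δ (eulerDeriv f) x = 2 * Δ f x + eulerDeriv (Δ f) x := by
  let b := stdOrthonormalBasis ℝ E
  have hf₁ (v : E) : ContDiff ℝ 2 (fun y => fderiv ℝ f y v) :=
    contDiff_fderiv_apply hf (by norm_num) v
  have hf₂ (v : E) : ContDiff ℝ 1 (fun y => fderiv ℝ (fun z => fderiv ℝ f z v) y v) :=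
    contDiff_fderiv_apply (hf₁ v) (by norm_num) v
  have hf₃ : ContDiff ℝ 2 f := hf.of_le (by norm_num)
  have hΔ : Δ f = fun y => ∑ i, fderiv ℝ (fun z => fderiv ℝ f z (b i)) y (b i) :=
    funext fun y => laplacian_eq_sum_fderiv_fderiv b hf₃.contDiffAt
  have hsecond (v : E) : fderiv ℝ (fun y => fderiv ℝ (eulerDeriv f) y v) x v =
      eulerDeriv (fun y => fderiv ℝ (fun z => fderiv ℝ f z v) y v) x +
        2 * fderiv ℝ (fun y => fderiv ℝ f y v) x v := by
    simp_rw [fderiv_eulerDeriv hf₃.contDiffAt]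
    rw [fderiv_fun_add ((contDiff_eulerDeriv (hf₁ v) (m := 1) (by norm_num)).differentiable
        one_ne_zero x) ((hf₁ v).differentiable two_ne_zero x), add_apply,
      fderiv_eulerDeriv (hf₁ v).contDiffAt]
    ring
  have hsum : eulerDeriv (Δ f) x =
      ∑ i, eulerDeriv (fun y => fderiv ℝ (fun z => fderiv ℝ f z (b i)) y (b i)) x := by
    rw [hΔ, eulerDeriv, fderiv_fun_sum fun i _ => (hf₂ (b i)).differentiable one_ne_zero x]
    simp [eulerDeriv]
  rw [laplacian_eq_sum_fderiv_fderiv b (contDiff_eulerDeriv hf (by norm_num)).contDiffAt, hsum,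
    hΔ, Finset.mul_sum, ← Finset.sum_add_distrib]
  exact Finset.sum_congr rfl fun i _ => by rw [hsecond, add_comm]

lemma divergence_gradient {f : E → ℝ} {x : E} (hf : ContDiffAt ℝ 2 f x) :
    divergence (∇ f) x = Δ f x := by
  let b := stdOrthonormalBasis ℝ E
  rw [divergence, LinearMap.trace_eq_sum_inner _ b, laplacian_eq_sum_fderiv_fderiv b hf]
  refine Finset.sum_congr rfl fun i _ => ?_
  rw [real_inner_comm, fderiv_fderiv_apply hf]
  exact inner_fderiv_gradient hf _ _

lemma divergence_smul_gradient {f g : E → ℝ} {x : E} (hf : DifferentiableAt ℝ f x)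
    (hg : ContDiff ℝ 2 g) :
    divergence (fun y => f y • ∇ g y) x = f x * Δ g x + ⟪∇ f x, ∇ g x⟫ := by
  have hg' : ContDiff ℝ 1 (∇ g) := contDiff_gradient hg le_rfl
  rw [divergence_smul hf (hg'.differentiable one_ne_zero x), divergence_gradient hg.contDiffAt,
    inner_gradient_left]

lemma eulerDeriv_norm_gradient_sq {f : E → ℝ} (hf : ContDiff ℝ 2 f) (x : E) :
    eulerDeriv (fun y => ‖∇ f y‖ ^ 2) x = 2 * fderiv ℝ (fderiv ℝ f) x x (∇ f x) := by
  have h := ((contDiff_gradient hf (m := 1) le_rfl).differentiable one_ne_zero x).hasFDerivAt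
  rw [eulerDeriv, h.norm_sq.fderiv, ← inner_fderiv_gradient hf.contDiffAt, real_inner_comm]
  simp only [smul_apply, ContinuousLinearMap.comp_apply, innerSL_apply_apply, nsmul_eq_mul,
    Nat.cast_ofNat]

namespace decayingDivergence

variable [MeasurableSpace E] [BorelSpace E] {μ : Measure E}

lemma mul_laplacian_add_inner_gradient_mem {f g k : E → ℝ} (hf : ContDiff ℝ 1 f)
    (hg : ContDiff ℝ 2 g) (hk : Integrable k μ) (hle : ∀ x, |f x| * ‖∇ g x‖ ≤ (1 + ‖x‖) * k x) :
    (fun x => f x * Δ g x + ⟪∇ f x, ∇ g x⟫) ∈ decayingDivergence μ := by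
  rw [← funext fun x => divergence_smul_gradient (hf.differentiable one_ne_zero x) hg]
  refine divergence_mem (hf.smul (contDiff_gradient hg le_rfl)) hk fun x => ?_
  rw [norm_smul, norm_eq_abs]
  exact hle x

lemma mul_laplacian_add_inner_gradient_mem_of_integrable {f g : E → ℝ} (hf : ContDiff ℝ 1 f)
    (hg : ContDiff ℝ 2 g) (hfg : Integrable (fun x => |f x| * ‖∇ g x‖) μ) :
    (fun x => f x * Δ g x + ⟪∇ f x, ∇ g x⟫) ∈ decayingDivergence μ :=
  mul_laplacian_add_inner_gradient_mem hf hg hfg fun x =>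
    le_mul_of_one_le_left (by positivity) (by simp)

lemma eulerDeriv_mul_laplacian_add_inner_gradient_mem {f g : E → ℝ} (hf : ContDiff ℝ 2 f)
    (hg : ContDiff ℝ 2 g) (hfg : Integrable (fun x => ‖∇ f x‖ * ‖∇ g x‖) μ) :
    (fun x => eulerDeriv f x * Δ g x + ⟪∇ (eulerDeriv f) x, ∇ g x⟫) ∈ decayingDivergence μ := by
  refine mul_laplacian_add_inner_gradient_mem (contDiff_eulerDeriv hf le_rfl) hg hfg fun x => ?_
  calc |eulerDeriv f x| * ‖∇ g x‖ ≤ ‖fderiv ℝ f x‖ * ‖x‖ * ‖∇ g x‖ := by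
        gcongr; exact (fderiv ℝ f x).le_opNorm x
    _ ≤ (1 + ‖x‖) * (‖∇ f x‖ * ‖∇ g x‖) := by
        rw [norm_gradient f]
        nlinarith [mul_nonneg (norm_nonneg (fderiv ℝ f x)) (norm_nonneg (∇ g x))]

theorem eulerDeriv_mul_laplacian_mem {f : E → ℝ} (hf : ContDiff ℝ 2 f)
    (hint : Integrable (fun x => ‖∇ f x‖ ^ 2) μ) :
    (fun x => eulerDeriv f x * Δ f x + (1 - finrank ℝ E / 2) * ‖∇ f x‖ ^ 2) ∈
      decayingDivergence μ := by
  have hmul := eulerDeriv_mul_laplacian_add_inner_gradient_mem hf hf (by simpa only [← sq])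
  have hsq := finrank_mul_add_eulerDeriv_mem ((contDiff_gradient hf le_rfl).norm_sq ℝ) hint
  convert add_mem hmul (Submodule.smul_mem _ (-1 / 2 : ℝ) hsq) using 1
  ext x
  have hinner : ⟪∇ (eulerDeriv f) x, ∇ f x⟫ =
      fderiv ℝ (fderiv ℝ f) x x (∇ f x) + ‖∇ f x‖ ^ 2 := by
    rw [inner_gradient_left, fderiv_eulerDeriv hf.contDiffAt, eulerDeriv,
      fderiv_fderiv_apply hf.contDiffAt, ← inner_gradient_left, real_inner_self_eq_norm_sq]
  simp only [Pi.add_apply, Pi.smul_apply, smul_eq_mul, hinner, eulerDeriv_norm_gradient_sq hf]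
  ring

theorem eulerDeriv_mul_laplacian_laplacian_mem {f : E → ℝ} (hf : ContDiff ℝ 4 f)
    (hΔ : Integrable (fun x => Δ f x ^ 2) μ) (hΔgrad : Integrable (fun x => |Δ f x| * ‖∇ f x‖) μ)
    (hΔhess : Integrable (fun x => |Δ f x| * ‖fderiv ℝ (fderiv ℝ f) x‖) μ)
    (hgrad : Integrable (fun x => ‖∇ f x‖ * ‖∇ (Δ f) x‖) μ) :
    (fun x => eulerDeriv f x * Δ (Δ f) x + (finrank ℝ E / 2 - 2) * Δ f x ^ 2) ∈
      decayingDivergence μ := by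
  have hf₂ : ContDiff ℝ 2 f := hf.of_le (by norm_num)
  have hf₃ : ContDiff ℝ 3 f := hf.of_le (by norm_num)
  have hΔf : ContDiff ℝ 2 (Δ f) := contDiff_laplacian hf (by norm_num)
  have hΔf₁ : ContDiff ℝ 1 (Δ f) := hΔf.of_le one_le_two
  have hEuler := eulerDeriv_mul_laplacian_add_inner_gradient_mem hf₂ hΔf hgrad
  have hGreen := mul_laplacian_add_inner_gradient_mem hΔf₁
    (contDiff_eulerDeriv hf₃ (by norm_num)) (hΔgrad.add hΔhess) fun x =>
      (mul_le_mul_of_nonneg_left (norm_gradient_eulerDeriv_le hf₂ x) (abs_nonneg _)).trans_eq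
        (by simp only [Pi.add_apply]; ring)
  have hsq := finrank_mul_add_eulerDeriv_mem (hΔf₁.pow 2) hΔ
  convert add_mem (sub_mem hEuler hGreen) (Submodule.smul_mem _ (1 / 2 : ℝ) hsq) using 1
  ext x
  simp only [Pi.add_apply, Pi.sub_apply, Pi.smul_apply, smul_eq_mul, laplacian_eulerDeriv hf₃,
    eulerDeriv_sq (hΔf₁.differentiable one_ne_zero x), real_inner_comm (∇ (Δ f) x)]
  ring

end decayingDivergence

end InnerProductSpace

lemma integrable_norm_mul_norm_of_sq {α F G : Type*} [MeasurableSpace α] {μ : Measure α}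
    [NormedAddCommGroup F] [NormedAddCommGroup G] {f : α → F} {g : α → G}
    (hf : AEStronglyMeasurable f μ) (hg : AEStronglyMeasurable g μ)
    (hf₂ : Integrable (fun x => ‖f x‖ ^ 2) μ) (hg₂ : Integrable (fun x => ‖g x‖ ^ 2) μ) :
    Integrable (fun x => ‖f x‖ * ‖g x‖) μ :=
  ((memLp_two_iff_integrable_sq hf.norm).2 hf₂).integrable_mul
    ((memLp_two_iff_integrable_sq hg.norm).2 hg₂)

lemma abs_rpow_eq_abs_rpow_sub_two_mul_sq {p : ℝ} (hp : p ≠ 0) (t : ℝ) :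
    |t| ^ p = |t| ^ (p - 2) * t ^ 2 := by
  rcases eq_or_ne t 0 with rfl | ht
  · simp [hp]
  · rw [← sq_abs, ← rpow_add_natCast (abs_ne_zero.2 ht)]
    simp

section Solution

variable {E : Type*} [NormedAddCommGroup E] [InnerProductSpace ℝ E] [FiniteDimensional ℝ E]
  [MeasurableSpace E] [BorelSpace E]

/-- Classical solutions `(u, φ)` of the Schrödinger–Bopp–Podolsky system on a Euclidean space `E`
of arbitrary dimension, with the integrability that the Nehari and Pohozaev identities require. -/
structure IsSchrodingerBoppPodolskySolution (a ω q p : ℝ) (u φ : E → ℝ) : Prop where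
  contDiff_left : ContDiff ℝ 2 u
  contDiff_right : ContDiff ℝ 4 φ
  schrodinger (x : E) : -Δ u x + ω * u x + q ^ 2 * φ x * u x = |u x| ^ (p - 2) * u x
  boppPodolsky (x : E) : -Δ φ x + a ^ 2 * Δ (Δ φ) x = 4 * π * u x ^ 2
  integrable_sq : Integrable fun x => u x ^ 2
  integrable_norm_gradient_sq_left : Integrable fun x => ‖∇ u x‖ ^ 2
  integrable_abs_rpow : Integrable fun x => |u x| ^ p
  integrable_abs_mul_sq : Integrable fun x => |φ x| * u x ^ 2
  integrable_norm_gradient_sq_right : Integrable fun x => ‖∇ φ x‖ ^ 2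
  integrable_laplacian_sq : Integrable fun x => Δ φ x ^ 2
  integrable_abs_mul_norm_gradient : Integrable fun x => |φ x| * ‖∇ φ x‖
  integrable_abs_mul_norm_gradient_laplacian : Integrable fun x => |φ x| * ‖∇ (Δ φ) x‖
  integrable_norm_gradient_mul : Integrable fun x => ‖∇ φ x‖ * ‖∇ (Δ φ) x‖
  integrable_abs_laplacian_mul :
    Integrable fun x => |Δ φ x| * ‖fderiv ℝ (fderiv ℝ φ) x‖

namespace IsSchrodingerBoppPodolskySolution

variable {a ω q p : ℝ} {u φ : E → ℝ}

lemma contDiff_laplacian_right (h : IsSchrodingerBoppPodolskySolution a ω q p u φ) :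
    ContDiff ℝ 2 (Δ φ) :=
  contDiff_laplacian h.contDiff_right (by norm_num)

lemma integrable_mul_sq (h : IsSchrodingerBoppPodolskySolution a ω q p u φ) :
    Integrable fun x => φ x * u x ^ 2 :=
  h.integrable_abs_mul_sq.mono' (h.contDiff_right.continuous.mul
    (h.contDiff_left.continuous.pow 2)).aestronglyMeasurable (.of_forall fun x => by simp)

lemma integrable_abs_laplacian_mul_norm_gradient
    (h : IsSchrodingerBoppPodolskySolution a ω q p u φ) :
    Integrable fun x => |Δ φ x| * ‖∇ φ x‖ :=
  integrable_norm_mul_norm_of_sq h.contDiff_laplacian_right.continuous.aestronglyMeasurable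
    (contDiff_gradient h.contDiff_right (m := 3) (by norm_num)).continuous.aestronglyMeasurable
    (by simpa using h.integrable_laplacian_sq) h.integrable_norm_gradient_sq_right

theorem nehari_left (h : IsSchrodingerBoppPodolskySolution a ω q p u φ) (hp : p ≠ 0) :
    (∫ x, ‖∇ u x‖ ^ 2) + ω * (∫ x, u x ^ 2) + q ^ 2 * (∫ x, φ x * u x ^ 2) =
      ∫ x, |u x| ^ p := by
  have hu := h.contDiff_left
  have hprod : Integrable fun x => |u x| * ‖∇ u x‖ :=
    integrable_norm_mul_norm_of_sq hu.continuous.aestronglyMeasurable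
      (contDiff_gradient hu (m := 1) le_rfl).continuous.aestronglyMeasurable
      (by simpa using h.integrable_sq) h.integrable_norm_gradient_sq_left
  have hmem := decayingDivergence.mul_laplacian_add_inner_gradient_mem_of_integrable
    (hu.of_le one_le_two) hu hprod
  have hdensity : (fun x => u x * Δ u x + ⟪∇ u x, ∇ u x⟫) = fun x =>
      ‖∇ u x‖ ^ 2 + ω * u x ^ 2 + q ^ 2 * (φ x * u x ^ 2) - |u x| ^ p := by
    ext x
    rw [real_inner_self_eq_norm_sq, abs_rpow_eq_abs_rpow_sub_two_mul_sq hp]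
    linear_combination -u x * h.schrodinger x
  have hA := h.integrable_norm_gradient_sq_left
  have hB := h.integrable_sq.const_mul ω
  have hC := h.integrable_mul_sq.const_mul (q ^ 2)
  have hD := h.integrable_abs_rpow
  rw [hdensity] at hmem
  have hzero := decayingDivergence.integral_eq_zero hmem (by fun_prop)
  rw [integral_sub (by fun_prop) hD, integral_add (by fun_prop) hC, integral_add hA hB,
    integral_const_mul, integral_const_mul] at hzero
  linarith

theorem nehari_right (h : IsSchrodingerBoppPodolskySolution a ω q p u φ) :
    (∫ x, ‖∇ φ x‖ ^ 2) + a ^ 2 * (∫ x, Δ φ x ^ 2) = 4 * π * ∫ x, φ x * u x ^ 2 := by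
  have hφ : ContDiff ℝ 2 φ := h.contDiff_right.of_le (by norm_num)
  have hφ₁ : ContDiff ℝ 1 φ := hφ.of_le one_le_two
  have hΔφ := h.contDiff_laplacian_right
  have hgrad := decayingDivergence.mul_laplacian_add_inner_gradient_mem_of_integrable hφ₁ hφ
    h.integrable_abs_mul_norm_gradient
  have hbilap := decayingDivergence.mul_laplacian_add_inner_gradient_mem_of_integrable hφ₁ hΔφ
    h.integrable_abs_mul_norm_gradient_laplacian
  have hlapsq := decayingDivergence.mul_laplacian_add_inner_gradient_mem_of_integrable
    (hΔφ.of_le one_le_two) hφ h.integrable_abs_laplacian_mul_norm_gradient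
  have hmem := sub_mem hgrad (Submodule.smul_mem _ (a ^ 2) (sub_mem hbilap hlapsq))
  have hdensity : (fun x => φ x * Δ φ x + ⟪∇ φ x, ∇ φ x⟫) - a ^ 2 •
      ((fun x => φ x * Δ (Δ φ) x + ⟪∇ φ x, ∇ (Δ φ) x⟫) -
        fun x => Δ φ x * Δ φ x + ⟪∇ (Δ φ) x, ∇ φ x⟫) = fun x =>
      ‖∇ φ x‖ ^ 2 + a ^ 2 * Δ φ x ^ 2 - 4 * π * (φ x * u x ^ 2) := by
    ext x
    simp only [Pi.sub_apply, Pi.smul_apply, smul_eq_mul, real_inner_self_eq_norm_sq,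
      real_inner_comm (∇ φ x)]
    linear_combination -φ x * h.boppPodolsky x
  have hG := h.integrable_norm_gradient_sq_right
  have hL := h.integrable_laplacian_sq.const_mul (a ^ 2)
  have hC := h.integrable_mul_sq.const_mul (4 * π)
  rw [hdensity] at hmem
  have hzero := decayingDivergence.integral_eq_zero hmem (by fun_prop)
  rw [integral_sub (by fun_prop) hC, integral_add hG hL, integral_const_mul,
    integral_const_mul] at hzero
  linarith

lemma pohozaev_density_mem (h : IsSchrodingerBoppPodolskySolution a ω q p u φ) (hp : 1 < p) :
    (fun x => (1 - finrank ℝ E / 2) * ‖∇ u x‖ ^ 2 - finrank ℝ E / 2 * ω * u x ^ 2 -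
      finrank ℝ E / 2 * q ^ 2 * (φ x * u x ^ 2) + finrank ℝ E / p * |u x| ^ p +
      q ^ 2 / (16 * π) * (finrank ℝ E - 2) * ‖∇ φ x‖ ^ 2 +
      q ^ 2 / (16 * π) * a ^ 2 * (finrank ℝ E - 4) * Δ φ x ^ 2) ∈
      decayingDivergence (volume : Measure E) := by
  have hu := h.contDiff_left
  have hu₁ : ContDiff ℝ 1 u := hu.of_le one_le_two
  have hφ : ContDiff ℝ 2 φ := h.contDiff_right.of_le (by norm_num)
  have hφ₁ : ContDiff ℝ 1 φ := hφ.of_le one_le_two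
  have hgradu := decayingDivergence.eulerDeriv_mul_laplacian_mem hu
    h.integrable_norm_gradient_sq_left
  have hsq := decayingDivergence.finrank_mul_add_eulerDeriv_mem (hu₁.pow 2) h.integrable_sq
  have hcoupling := decayingDivergence.finrank_mul_add_eulerDeriv_mem (hφ₁.mul (hu₁.pow 2))
    h.integrable_mul_sq
  have hpow := decayingDivergence.finrank_mul_add_eulerDeriv_mem (hu₁.norm_rpow hp)
    h.integrable_abs_rpow
  have hgradφ := decayingDivergence.eulerDeriv_mul_laplacian_mem hφ
    h.integrable_norm_gradient_sq_right
  have hlap := decayingDivergence.eulerDeriv_mul_laplacian_laplacian_mem h.contDiff_right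
    h.integrable_laplacian_sq h.integrable_abs_laplacian_mul_norm_gradient
    h.integrable_abs_laplacian_mul h.integrable_norm_gradient_mul
  convert add_mem (add_mem (sub_mem (sub_mem hgradu (Submodule.smul_mem _ (ω / 2) hsq))
    (Submodule.smul_mem _ (q ^ 2 / 2) hcoupling)) (Submodule.smul_mem _ (1 / p) hpow))
    (Submodule.smul_mem _ (q ^ 2 / (8 * π)) (sub_mem (Submodule.smul_mem _ (a ^ 2) hlap) hgradφ))
    using 1
  ext x
  have hdu := hu₁.differentiable one_ne_zero x
  have hdφ := hφ₁.differentiable one_ne_zero x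
  have hp₀ : p ≠ 0 := by linarith
  simp only [Pi.add_apply, Pi.sub_apply, Pi.smul_apply, smul_eq_mul, norm_eq_abs, eulerDeriv_sq hdu,
    eulerDeriv_mul hdφ (hdu.fun_pow 2), eulerDeriv_abs_rpow hdu hp]
  linear_combination (norm := (field_simp; ring)) eulerDeriv u x * h.schrodinger x -
    q ^ 2 / (8 * π) * eulerDeriv φ x * h.boppPodolsky x

theorem pohozaev (h : IsSchrodingerBoppPodolskySolution a ω q p u φ) (hp : 1 < p) :
    (1 - finrank ℝ E / 2) * (∫ x, ‖∇ u x‖ ^ 2) - finrank ℝ E / 2 * ω * (∫ x, u x ^ 2) -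
      finrank ℝ E / 2 * q ^ 2 * (∫ x, φ x * u x ^ 2) +
      finrank ℝ E / p * (∫ x, |u x| ^ p) +
      q ^ 2 / (16 * π) * (finrank ℝ E - 2) * (∫ x, ‖∇ φ x‖ ^ 2) +
      q ^ 2 / (16 * π) * a ^ 2 * (finrank ℝ E - 4) * (∫ x, Δ φ x ^ 2) = 0 := by
  have hA := h.integrable_norm_gradient_sq_left.const_mul (1 - finrank ℝ E / 2 : ℝ)
  have hB := h.integrable_sq.const_mul (finrank ℝ E / 2 * ω)
  have hC := h.integrable_mul_sq.const_mul (finrank ℝ E / 2 * q ^ 2)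
  have hD := h.integrable_abs_rpow.const_mul (finrank ℝ E / p)
  have hG := h.integrable_norm_gradient_sq_right.const_mul
    (q ^ 2 / (16 * π) * (finrank ℝ E - 2))
  have hL := h.integrable_laplacian_sq.const_mul (q ^ 2 / (16 * π) * a ^ 2 * (finrank ℝ E - 4))
  have hzero := decayingDivergence.integral_eq_zero (h.pohozaev_density_mem hp) (by fun_prop)
  rwa [integral_add (by fun_prop) hL, integral_add (by fun_prop) hG, integral_add (by fun_prop) hD,
    integral_sub (by fun_prop) hC, integral_sub hA hB, integral_const_mul, integral_const_mul,
    integral_const_mul, integral_const_mul, integral_const_mul, integral_const_mul] at hzero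

theorem energy_balance (h : IsSchrodingerBoppPodolskySolution a ω q p u φ) (hp : 1 < p) :
    ω * (∫ x, u x ^ 2) + (finrank ℝ E / 2 - 1 - finrank ℝ E / p) * (∫ x, |u x| ^ p) +
      q ^ 2 / (16 * π) * ((6 - finrank ℝ E) * (∫ x, ‖∇ φ x‖ ^ 2) +
        (8 - finrank ℝ E) * a ^ 2 * (∫ x, Δ φ x ^ 2)) = 0 := by
  linear_combination (norm := (field_simp; ring)) -h.pohozaev hp -
    (finrank ℝ E / 2 - 1) * h.nehari_left (by linarith) + q ^ 2 / (4 * π) * h.nehari_right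

theorem integral_sq_nonpos (h : IsSchrodingerBoppPodolskySolution a ω q p u φ) (hω : 0 < ω)
    (hd : finrank ℝ E ≤ 6) (hp : 1 < p) (hp_crit : 2 * finrank ℝ E ≤ (finrank ℝ E - 2) * p) :
    ∫ x, u x ^ 2 ≤ 0 := by
  have hd' : (finrank ℝ E : ℝ) ≤ 6 := mod_cast hd
  have hcoeff : 0 ≤ (finrank ℝ E / 2 - 1 - finrank ℝ E / p : ℝ) := by
    rw [sub_nonneg, div_le_iff₀ (by linarith)]
    linarith
  have hpow : 0 ≤ ∫ x, |u x| ^ p := integral_nonneg fun x => by positivity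
  have hgrad : 0 ≤ ∫ x, ‖∇ φ x‖ ^ 2 := integral_nonneg fun x => by positivity
  have hlap : 0 ≤ ∫ x, Δ φ x ^ 2 := integral_nonneg fun x => sq_nonneg _
  have hfield : 0 ≤ q ^ 2 / (16 * π) * ((6 - finrank ℝ E) * (∫ x, ‖∇ φ x‖ ^ 2) +
      (8 - finrank ℝ E) * a ^ 2 * (∫ x, Δ φ x ^ 2)) := by
    have h₆ : (0 : ℝ) ≤ 6 - finrank ℝ E := by linarith
    have h₈ : (0 : ℝ) ≤ 8 - finrank ℝ E := by linarith
    exact mul_nonneg (by positivity)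
      (add_nonneg (mul_nonneg h₆ hgrad) (mul_nonneg (mul_nonneg h₈ (sq_nonneg a)) hlap))
  refine nonpos_of_mul_nonpos_right (a := ω) ?_ hω
  linarith [h.energy_balance hp, mul_nonneg hcoeff hpow]

end IsSchrodingerBoppPodolskySolution

theorem nonexistence_p_ge_six_general {a ω q p : ℝ} {u φ : E → ℝ} (hω : 0 < ω)
    (hd : 2 < finrank ℝ E) (hd' : finrank ℝ E ≤ 6)
    (hp : 2 * finrank ℝ E / (finrank ℝ E - 2) ≤ p)
    (h : IsSchrodingerBoppPodolskySolution a ω q p u φ) : u = 0 := by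
  have hd₂ : (0 : ℝ) < finrank ℝ E - 2 := sub_pos.2 (mod_cast hd)
  have hp_crit : 2 * finrank ℝ E ≤ (finrank ℝ E - 2) * p := (div_le_iff₀' hd₂).1 hp
  have hp₁ : 1 < p := by nlinarith
  have hzero : ∫ x, u x ^ 2 = 0 :=
    (h.integral_sq_nonpos hω hd' hp₁ hp_crit).antisymm (integral_nonneg fun x => sq_nonneg _)
  have hu : Continuous u := h.contDiff_left.continuous
  have hae := (integral_eq_zero_iff_of_nonneg (fun x => sq_nonneg _) h.integrable_sq).1 hzero
  have hsq := ((hu.pow 2).ae_eq_iff_eq volume continuous_const).1 hae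
  exact funext fun x => pow_eq_zero_iff two_ne_zero |>.1 (congrFun hsq x)

end Solution

lemma lap_eq_laplacian {f : E3 → ℝ} (hf : ContDiff ℝ 2 f) : lap f = Δ f := by
  ext x
  simp [lap, laplacian_eq_sum_fderiv_fderiv (EuclideanSpace.basisFun (Fin 3) ℝ) hf.contDiffAt]

end

/-- Nonexistence for `p ≥ 6`: a classical solution of the Schrödinger–Bopp–Podolsky system
with the stated integrability properties must be trivial. -/
theorem nonexistence_p_ge_six (a ω q p : ℝ) (ha : 0 < a) (hω : 0 < ω) (hp : 2 < p)
    (hp6 : 6 ≤ p)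
    (u φ : E3 → ℝ) (hu : ContDiff ℝ 2 u) (hφ : ContDiff ℝ 4 φ)
    (heq1 : ∀ x, -(lap u x) + ω * u x + q ^ 2 * φ x * u x = |u x| ^ (p - 2) * u x)
    (heq2 : ∀ x, -(lap φ x) + a ^ 2 * lap (lap φ) x = 4 * π * (u x) ^ 2)
    (hI1 : Integrable (fun x => (u x) ^ 2) (volume : Measure E3))
    (hI2 : Integrable (fun x => ‖gradient u x‖ ^ 2) (volume : Measure E3))
    (hI3 : Integrable (fun x => |u x| ^ p) (volume : Measure E3))
    (hI4 : Integrable (fun x => |φ x| * (u x) ^ 2) (volume : Measure E3))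
    (hI5 : Integrable (fun x => ‖gradient φ x‖ ^ 2) (volume : Measure E3))
    (hI6 : Integrable (fun x => (lap φ x) ^ 2) (volume : Measure E3))
    (hI7 : Integrable (fun x => |φ x| * ‖gradient φ x‖) (volume : Measure E3))
    (hI8 : Integrable (fun x => |φ x| * ‖gradient (lap φ) x‖) (volume : Measure E3))
    (hI9 : Integrable (fun x => ‖gradient φ x‖ * ‖gradient (lap φ) x‖)
      (volume : Measure E3))
    (hI10 : Integrable (fun x => |lap φ x| * ‖fderiv ℝ (fderiv ℝ φ) x‖)
      (volume : Measure E3)) :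
    u = 0 := by
  have hlap : lap φ = Laplacian.laplacian φ := lap_eq_laplacian (hφ.of_le (by norm_num))
  have hbilap : lap (Laplacian.laplacian φ) = Laplacian.laplacian (Laplacian.laplacian φ) :=
    lap_eq_laplacian (contDiff_laplacian hφ (by norm_num))
  rw [lap_eq_laplacian hu] at heq1
  simp only [hlap, hbilap] at heq2 hI6 hI8 hI9 hI10
  have hsol : IsSchrodingerBoppPodolskySolution a ω q p u φ :=
    ⟨hu, hφ, heq1, heq2, hI1, hI2, hI3, hI4, hI5, hI6, hI7, hI8, hI9, hI10⟩
  exact nonexistence_p_ge_six_general hω (by simp) (by simp) (by norm_num [hp6]) hsol
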